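/- Let F be an algebraically closed field and let θ : F^m → F^m be a polynomial map whose comorphism ϑ (the induced endomorphism of F[x₁,…,x_m]) satisfies: (i) det J(ϑ) ∈ F^× (the determinant of the Jacobian matrix (∂ϑ(x_i)/∂x_j) is a nonzero constant), and (ii) ϑ maps maximal ideals of F[x₁,…,x_m] to maximal ideals. Then ϑ is an automorphism of F[x₁,…,x_m]. -/

import Mathlib

open MvPolynomial

/-!
Write `R → S` for the ring map underlying `ϑ`. Invertibility of the Jacobian determinant says that
`S ⊗[R] Ω[R⁄F] → Ω[S⁄F]` is bijective, and then the Jacobi–Zariski sequence shows that `S` is étale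
over `R`. If `M S` is maximal, the residue field extension `R ⧸ M → S ⧸ M S` is separable because
`S` is unramified over `R`, and purely inseparable because `F` is separably closed, so it is
trivial. Hence every maximal ideal of `S ⊗[R] S` contains the ideal of the diagonal. For unramified
`S` that ideal is idempotent and finitely generated, so it vanishes by Nakayama's lemma, and
`R → S` is an epimorphism. It is also faithfully flat, since `M S ≠ S` for all maximal `M`, and
faithfully flat epimorphisms of commutative rings are isomorphisms.
-/

open scoped TensorProduct

section Diagonal

variable (R S : Type*) [CommRing R] [CommRing S] [Algebra R S]

theorem bijective_algebraMap_of_faithfullyFlat_of_isEpi [Module.FaithfullyFlat R S]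
    [Algebra.IsEpi R S] : Function.Bijective (algebraMap R S) := by
  refine ⟨FaithfulSMul.algebraMap_injective R S, ?_⟩
  have lTensor_surjective : Function.Surjective ((Algebra.linearMap R S).lTensor S) := fun x ↦
    ⟨TensorProduct.lift (LinearMap.mul R S) x ⊗ₜ 1, Algebra.IsEpi.injective_lift_mul (by simp)⟩
  exact (Module.FaithfullyFlat.lTensor_surjective_iff_surjective R S _).mp lTensor_surjective

variable {R S}

theorem isEpi_of_kaehlerDifferential_ideal_le_jacobson [Algebra.FiniteType R S]
    [Algebra.FormallyUnramified R S]
    (h : KaehlerDifferential.ideal R S ≤ (⊥ : Ideal (S ⊗[R] S)).jacobson) :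
    Algebra.IsEpi R S := by
  have idempotent : IsIdempotentElem (KaehlerDifferential.ideal R S) :=
    (Ideal.cotangent_subsingleton_iff _).mp (inferInstanceAs (Subsingleton Ω[S⁄R]))
  have eq_bot : KaehlerDifferential.ideal R S = ⊥ :=
    Submodule.eq_bot_of_le_smul_of_le_jacobson_bot _ _ (KaehlerDifferential.ideal_fg R S)
      idempotent.ge h
  exact ⟨(RingHom.injective_iff_ker_eq_bot
    (Algebra.TensorProduct.lmul' R : S ⊗[R] S →ₐ[R] S).toRingHom).mpr eq_bot⟩

theorem kaehlerDifferential_ideal_le_of_surjective {M : Ideal R} {N : Ideal (S ⊗[R] S)}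
    (hMN : M ≤ N.under R)
    (hM : Function.Surjective (algebraMap R (S ⧸ M.map (algebraMap R S)))) :
    KaehlerDifferential.ideal R S ≤ N := by
  have map_le_comap (f : S →ₐ[R] S ⊗[R] S) : M.map (algebraMap R S) ≤ N.comap f :=
    Ideal.map_le_iff_le_comap.mpr fun r hr ↦ by
      simpa only [Ideal.mem_comap, AlgHom.commutes] using hMN hr
  rw [← KaehlerDifferential.span_range_eq_ideal, Ideal.span_le]
  rintro _ ⟨s, rfl⟩
  obtain ⟨r, hr⟩ := hM s
  have sub_mem : s - algebraMap R S r ∈ M.map (algebraMap R S) := Ideal.Quotient.eq.mp hr.symm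
  have tmul_one : (1 : S) ⊗ₜ[R] algebraMap R S r = algebraMap R S r ⊗ₜ[R] 1 := by
    rw [Algebra.algebraMap_eq_smul_one, TensorProduct.smul_tmul]
  have sub_eq : (1 : S) ⊗ₜ[R] s - s ⊗ₜ[R] (1 : S) =
      (1 : S) ⊗ₜ[R] (s - algebraMap R S r) - (s - algebraMap R S r) ⊗ₜ[R] (1 : S) := by
    rw [TensorProduct.tmul_sub, TensorProduct.sub_tmul, tmul_one, sub_sub_sub_cancel_right]
  change (1 : S) ⊗ₜ[R] s - s ⊗ₜ[R] (1 : S) ∈ N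
  rw [sub_eq]
  exact N.sub_mem (map_le_comap Algebra.TensorProduct.includeRight sub_mem)
    (map_le_comap Algebra.TensorProduct.includeLeft sub_mem)

theorem isMaximal_under_of_finiteType [IsJacobsonRing R] [Algebra.FiniteType R S] (N : Ideal S)
    [N.IsMaximal] : (N.under R).IsMaximal := by
  let _ := Ideal.Quotient.field N
  have : Module.Finite R (S ⧸ N) := finite_of_finite_type_of_isJacobsonRing R (S ⧸ N)
  have comap_bot : (⊥ : Ideal (S ⧸ N)).comap (algebraMap R (S ⧸ N)) = N.under R := by
    rw [IsScalarTower.algebraMap_eq R S (S ⧸ N), ← Ideal.comap_comap, Ideal.Quotient.algebraMap_eq,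
      ← RingHom.ker_eq_comap_bot, Ideal.mk_ker]
  exact comap_bot ▸ Ideal.isMaximal_comap_of_isIntegral_of_isMaximal ⊥

theorem isEpi_of_surjective_algebraMap_quotient_map [IsJacobsonRing R] [Algebra.FiniteType R S]
    [Algebra.FormallyUnramified R S]
    (h : ∀ M : Ideal R, M.IsMaximal →
      Function.Surjective (algebraMap R (S ⧸ M.map (algebraMap R S)))) :
    Algebra.IsEpi R S := by
  have : Algebra.FiniteType R (S ⊗[R] S) := .trans (S := S) inferInstance inferInstance
  refine isEpi_of_kaehlerDifferential_ideal_le_jacobson (le_sInf fun N ⟨_, hN⟩ ↦ ?_)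
  exact kaehlerDifferential_ideal_le_of_surjective le_rfl (h _ (isMaximal_under_of_finiteType N))

theorem faithfullyFlat_of_map_ne_top [Module.Flat R S]
    (h : ∀ M : Ideal R, M.IsMaximal → M.map (algebraMap R S) ≠ ⊤) :
    Module.FaithfullyFlat R S where
  submodule_ne_top M hM := by
    rw [Ideal.smul_top_eq_map]
    exact (Submodule.restrictScalars_eq_top_iff _ _ _).not.mpr (h M hM)

end Diagonal

section SepClosed

variable {F R S : Type*} [Field F] [IsSepClosed F] [CommRing R] [CommRing S]
  [Algebra F R] [Algebra F S]

variable (F) in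
theorem surjective_algebraMap_quotient_map_of_isSepClosed [Algebra R S] [IsScalarTower F R S]
    [Algebra.FiniteType F S] [Algebra.FormallyUnramified R S] (M : Ideal R) [M.IsMaximal]
    [(M.map (algebraMap R S)).IsMaximal] :
    Function.Surjective (algebraMap R (S ⧸ M.map (algebraMap R S))) := by
  let _ := Ideal.Quotient.field M
  let _ := Ideal.Quotient.field (M.map (algebraMap R S))
  have : IsScalarTower F (R ⧸ M) (S ⧸ M.map (algebraMap R S)) := .to₁₃₄ F R _ _
  have : Module.Finite F (S ⧸ M.map (algebraMap R S)) :=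
    finite_of_finite_type_of_isJacobsonRing F _
  have : Algebra.FormallyUnramified R (S ⧸ M.map (algebraMap R S)) := .comp R S _
  have : Algebra.FormallyUnramified (R ⧸ M) (S ⧸ M.map (algebraMap R S)) :=
    .of_restrictScalars R _ _
  have : Module.Finite (R ⧸ M) (S ⧸ M.map (algebraMap R S)) := .of_restrictScalars_finite F _ _
  have : Algebra.IsSeparable (R ⧸ M) (S ⧸ M.map (algebraMap R S)) :=
    Algebra.FormallyUnramified.isSeparable _ _
  have : IsPurelyInseparable (R ⧸ M) (S ⧸ M.map (algebraMap R S)) := .tower_top F _ _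
  exact (IsPurelyInseparable.surjective_algebraMap_of_isSeparable (R ⧸ M)
    (S ⧸ M.map (algebraMap R S))).comp Ideal.Quotient.mk_surjective

theorem bijective_of_etale_of_isMaximal_map [Algebra.FiniteType F R] (ϑ : R →ₐ[F] S)
    (hϑ : ϑ.toRingHom.Etale) (h : ∀ M : Ideal R, M.IsMaximal → (M.map ϑ.toRingHom).IsMaximal) :
    Function.Bijective ϑ := by
  let _ := ϑ.toRingHom.toAlgebra
  have : IsScalarTower F R S := .of_algebraMap_eq fun a ↦ (ϑ.commutes a).symm
  have : Algebra.Etale R S := hϑ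
  have : Algebra.FiniteType F S := .trans (S := R) inferInstance inferInstance
  have : IsJacobsonRing R := isJacobsonRing_of_finiteType (A := F)
  have : Module.FaithfullyFlat R S := faithfullyFlat_of_map_ne_top fun M hM ↦ (h M hM).ne_top
  have : Algebra.IsEpi R S := isEpi_of_surjective_algebraMap_quotient_map fun M hM ↦
    have : (M.map (algebraMap R S)).IsMaximal := h M hM
    surjective_algebraMap_quotient_map_of_isSepClosed F M
  exact bijective_algebraMap_of_faithfullyFlat_of_isEpi R S

end SepClosed

section Jacobian

theorem formallyEtale_of_bijective_mapBaseChange (A R S : Type*) [CommRing A] [CommRing R]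
    [CommRing S] [Algebra A R] [Algebra A S] [Algebra R S] [IsScalarTower A R S]
    [Algebra.FormallySmooth A S]
    (h : Function.Bijective (KaehlerDifferential.mapBaseChange A R S)) :
    Algebra.FormallyEtale R S where
  subsingleton_kaehlerDifferential := by
    refine subsingleton_of_forall_eq 0 fun x ↦ ?_
    obtain ⟨y, rfl⟩ := KaehlerDifferential.map_surjective A R S x
    obtain ⟨z, rfl⟩ := h.surjective y
    exact (KaehlerDifferential.exact_mapBaseChange_map A R S).apply_apply_eq_zero z
  subsingleton_h1Cotangent := by
    have δ_injective : Function.Injective (Algebra.H1Cotangent.δ A R S) := by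
      rw [injective_iff_map_eq_zero]
      intro x hx
      obtain ⟨y, rfl⟩ := (Algebra.H1Cotangent.exact_map_δ A R S x).mp hx
      rw [Subsingleton.elim y 0, map_zero]
    refine subsingleton_of_forall_eq 0 fun x ↦ δ_injective (h.injective ?_)
    rw [(Algebra.H1Cotangent.exact_δ_mapBaseChange A R S).apply_apply_eq_zero, map_zero, map_zero]

variable {A S σ τ : Type*} [CommRing A] [CommRing S] [Algebra A S]

theorem toMatrix_mapBaseChange_mvPolynomial [Algebra (MvPolynomial σ A) S]
    [IsScalarTower A (MvPolynomial σ A) S] [Fintype σ] [DecidableEq σ] [Finite τ]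
    (b : Module.Basis τ S Ω[S⁄A]) :
    LinearMap.toMatrix ((KaehlerDifferential.mvPolynomialBasis A σ).baseChange S) b
        (KaehlerDifferential.mapBaseChange A (MvPolynomial σ A) S) =
      (Matrix.of fun i j ↦ b.repr
        (KaehlerDifferential.D A S (algebraMap (MvPolynomial σ A) S (X i))) j).transpose := by
  ext j i
  simp [LinearMap.toMatrix_apply, KaehlerDifferential.mvPolynomialBasis_apply]

variable [Fintype σ] [DecidableEq σ]

theorem etale_of_isUnit_det_repr_D [Algebra.Smooth A S] (b : Module.Basis σ S Ω[S⁄A])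
    (ϑ : MvPolynomial σ A →ₐ[A] S)
    (h : IsUnit (Matrix.of fun i j ↦ b.repr (KaehlerDifferential.D A S (ϑ (X i))) j).det) :
    ϑ.toRingHom.Etale := by
  let _ := ϑ.toRingHom.toAlgebra
  have : IsScalarTower A (MvPolynomial σ A) S := .of_algebraMap_eq fun a ↦ (ϑ.commutes a).symm
  have isUnit_det_toMatrix : IsUnit (LinearMap.toMatrix
      ((KaehlerDifferential.mvPolynomialBasis A σ).baseChange S) b
      (KaehlerDifferential.mapBaseChange A (MvPolynomial σ A) S)).det := by
    rw [toMatrix_mapBaseChange_mvPolynomial, Matrix.det_transpose]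
    exact h
  have : Algebra.FormallyEtale (MvPolynomial σ A) S :=
    formallyEtale_of_bijective_mapBaseChange A (MvPolynomial σ A) S
      (LinearEquiv.ofIsUnitDet isUnit_det_toMatrix).bijective
  have : Algebra.FinitePresentation (MvPolynomial σ A) S :=
    .of_restrict_scalars_finitePresentation A _ _
  exact ⟨‹_›, ‹_›⟩

/-- The Jacobian matrix `J(ϑ)` of an endomorphism `ϑ` of a polynomial ring; `ϑ` is étale when its
determinant is a unit. Row `i` is the gradient of `ϑ (X i)`. -/
noncomputable def jacobianMatrix (ϑ : MvPolynomial σ A →ₐ[A] MvPolynomial σ A) :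
    Matrix σ σ (MvPolynomial σ A) :=
  Matrix.of fun i j ↦ pderiv j (ϑ (X i))

theorem etale_of_isUnit_det_jacobianMatrix (ϑ : MvPolynomial σ A →ₐ[A] MvPolynomial σ A)
    (h : IsUnit (jacobianMatrix ϑ).det) : ϑ.toRingHom.Etale :=
  have : Algebra.Smooth A (MvPolynomial σ A) := ⟨inferInstance, inferInstance⟩
  etale_of_isUnit_det_repr_D (KaehlerDifferential.mvPolynomialBasis A σ) ϑ <| by
    simpa only [KaehlerDifferential.mvPolynomialBasis_repr_apply, jacobianMatrix] using h

end Jacobian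

theorem polynomial_endo_bijective_of_jacobian_and_maximal_general {F σ : Type*} [Field F]
    [IsSepClosed F] [Fintype σ] [DecidableEq σ] (ϑ : MvPolynomial σ F →ₐ[F] MvPolynomial σ F)
    (hdet : IsUnit (jacobianMatrix ϑ).det)
    (hmax : ∀ M : Ideal (MvPolynomial σ F), M.IsMaximal → (M.map ϑ.toRingHom).IsMaximal) :
    Function.Bijective ϑ :=
  bijective_of_etale_of_isMaximal_map ϑ (etale_of_isUnit_det_jacobianMatrix ϑ hdet) hmax

/-- Strong version of the Jacobian statement: over an algebraically closed field, an
endomorphism `ϑ` of the polynomial ring whose Jacobian determinant is a nonzero constant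
and which maps maximal ideals to maximal ideals is an automorphism. -/
theorem polynomial_endo_bijective_of_jacobian_and_maximal {F : Type*} [Field F]
    [IsAlgClosed F] {m : ℕ} (ϑ : MvPolynomial (Fin m) F →ₐ[F] MvPolynomial (Fin m) F)
    (c : F) (hc : c ≠ 0)
    (hdet : (Matrix.of fun i j : Fin m => pderiv j (ϑ (X i))).det = C c)
    (hmax : ∀ M : Ideal (MvPolynomial (Fin m) F), M.IsMaximal →
      (Ideal.map ϑ.toRingHom M).IsMaximal) :
    Function.Bijective ϑ := by
  have isUnit_det : IsUnit (jacobianMatrix ϑ).det := hdet ▸ (isUnit_iff_ne_zero.mpr hc).map C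
  exact polynomial_endo_bijective_of_jacobian_and_maximal_general ϑ isUnit_det hmax
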